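/- Tweedie's formula for Gaussian-smoothed distributions: for every x ∈ ℝ^n, the smoothed density satisfies p(x) > 0, the function x ↦ log p(x) is differentiable at x, and its gradient (the score function) satisfies ∇(log p)(x) = (1/σ²) · (D(x) − x), where D(x) is the posterior-mean (MMSE) denoiser. -/

import Mathlib

/-! Write `φ(u) = C exp(-‖u‖²/(2σ²))`. Its gradient is `-σ⁻² φ(u) u`, and `‖φ(u) u‖ ≤ C σ`
uniformly in `u`. As `μ` is a probability measure, dominated convergence with a constant bound
gives `∇p(x) = -σ⁻² ∫ φ(x - h) (x - h) dμ(h)`, with no moment assumption on `μ`. The same bound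
makes `h ↦ φ(x - h) h` integrable, so this gradient splits as `σ⁻² (p(x) D(x) - p(x) x)`. Dividing
by `p(x) > 0` gives the formula by the chain rule for `log`. -/

open MeasureTheory Real

/-- With `t = ‖u‖`, this bounds the gradient of `exp (-‖u‖² / (2σ²))` by `σ⁻¹`, uniformly in `u`. -/
lemma mul_exp_neg_sq_le {σ t : ℝ} (hσ : 0 < σ) :
    t * Real.exp (-t ^ 2 / (2 * σ ^ 2)) ≤ σ := by
  -- By AM-GM, `t ≤ σ (1 + t²/(2σ²)) ≤ σ exp (t²/(2σ²))`.
  have h1 : t ≤ σ * (t ^ 2 / (2 * σ ^ 2) + 1) := by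
    have : σ * (t ^ 2 / (2 * σ ^ 2) + 1) - t = ((t - σ) ^ 2 + σ ^ 2) / (2 * σ) := by
      field_simp
      ring
    have : 0 ≤ ((t - σ) ^ 2 + σ ^ 2) / (2 * σ) := by positivity
    linarith
  have h2 : t ≤ σ * Real.exp (t ^ 2 / (2 * σ ^ 2)) :=
    h1.trans (mul_le_mul_of_nonneg_left (Real.add_one_le_exp _) hσ.le)
  rw [neg_div, Real.exp_neg, ← div_eq_mul_inv, div_le_iff₀ (Real.exp_pos _)]
  exact h2

section Gaussian

variable {E : Type*} [NormedAddCommGroup E] [InnerProductSpace ℝ E]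

lemma hasFDerivAt_gaussian (C σ : ℝ) (hσ : 0 < σ) (h x : E) :
    HasFDerivAt (fun y : E => C * Real.exp (-‖y - h‖ ^ 2 / (2 * σ ^ 2)))
      (innerSL ℝ ((-(1 / σ ^ 2)) •
        ((C * Real.exp (-‖x - h‖ ^ 2 / (2 * σ ^ 2))) • (x - h)))) x := by
  have h1 := ((((hasFDerivAt_id x).sub_const h).norm_sq.neg.mul_const
    (2 * σ ^ 2)⁻¹).exp).const_mul C
  simp only [div_eq_mul_inv]
  refine h1.congr_fderiv ?_
  ext v
  simp
  field_simp

end Gaussian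

/-- **Tweedie's formula** for Gaussian-smoothed distributions: for every `x : ℝⁿ`,
the smoothed density `p` is positive at `x`, `log ∘ p` is differentiable at `x`, and
its gradient (the score function) equals `(1/σ²) • (D x - x)`, where `D` is the
posterior-mean (MMSE) denoiser. -/
theorem tweedie_formula
    (n : ℕ) (hn : 1 ≤ n) (σ : ℝ) (hσ : 0 < σ)
    (μ : Measure (EuclideanSpace ℝ (Fin n))) [IsProbabilityMeasure μ]
    (φ : EuclideanSpace ℝ (Fin n) → ℝ)
    (hφ : ∀ u, φ u = (2 * π * σ ^ 2) ^ (-(n : ℝ) / 2) * Real.exp (-‖u‖ ^ 2 / (2 * σ ^ 2)))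
    (p : EuclideanSpace ℝ (Fin n) → ℝ)
    (hp : ∀ x, p x = ∫ h, φ (x - h) ∂μ)
    (D : EuclideanSpace ℝ (Fin n) → EuclideanSpace ℝ (Fin n))
    (hD : ∀ x, D x = (p x)⁻¹ • ∫ h, φ (x - h) • h ∂μ) :
    ∀ x : EuclideanSpace ℝ (Fin n),
      0 < p x ∧
      DifferentiableAt ℝ (fun y => Real.log (p y)) x ∧
      gradient (fun y => Real.log (p y)) x = (1 / σ ^ 2) • (D x - x) := by
  set C : ℝ := (2 * π * σ ^ 2) ^ (-(n : ℝ) / 2) with hC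
  have hCpos : 0 < C := by positivity
  have hφpos : ∀ u, 0 < φ u := fun u => by rw [hφ]; positivity
  have hφcont : Continuous φ := by
    rw [funext hφ]
    fun_prop
  have hφle : ∀ u, φ u ≤ C := fun u => by
    rw [hφ]
    refine mul_le_of_le_one_right hCpos.le (Real.exp_le_one_iff.2 ?_)
    rw [neg_div]
    exact neg_nonpos.2 (by positivity)
  have hφsmul : ∀ u, ‖φ u • u‖ ≤ C * σ := fun u => by
    rw [norm_smul, Real.norm_of_nonneg (hφpos u).le, hφ, mul_assoc, mul_comm (Real.exp _)]
    exact mul_le_mul_of_nonneg_left (mul_exp_neg_sq_le hσ) hCpos.le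
  have hint : ∀ x, Integrable (fun h => φ (x - h)) μ := fun x =>
    Integrable.of_bound (by fun_prop) C
      (.of_forall fun h => by
        rw [Real.norm_of_nonneg (hφpos _).le]
        exact hφle _)
  have hint' : ∀ x, Integrable (fun h => φ (x - h) • (x - h)) μ := fun x =>
    Integrable.of_bound (by fun_prop) (C * σ) (.of_forall fun h => hφsmul _)
  have hpos : ∀ x, 0 < p x := fun x => by
    rw [hp, integral_pos_iff_support_of_nonneg (fun h => (hφpos _).le) (hint x)]
    have : Function.support (fun h => φ (x - h)) = Set.univ :=
      Set.eq_univ_of_forall fun h => (hφpos _).ne'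
    simp [this]
  intro x
  have hderiv : HasFDerivAt p
      (∫ h, innerSL ℝ ((-(1 / σ ^ 2)) • (φ (x - h) • (x - h))) ∂μ) x := by
    rw [funext hp]
    refine hasFDerivAt_integral_of_dominated_of_fderiv_le
      (F' := fun y h => innerSL ℝ ((-(1 / σ ^ 2)) • (φ (y - h) • (y - h))))
      (bound := fun _ => 1 / σ ^ 2 * (C * σ)) Filter.univ_mem
      (.of_forall fun y => (hint y).aestronglyMeasurable) (hint x) ?_
      (.of_forall fun h y _ => ?_) (integrable_const _) (.of_forall fun h y _ => ?_)
    · exact ((innerSL ℝ).continuous.comp (by fun_prop)).aestronglyMeasurable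
    · rw [innerSL_apply_norm, norm_smul, norm_neg, Real.norm_of_nonneg (by positivity)]
      exact mul_le_mul_of_nonneg_left (hφsmul _) (by positivity)
    · simp only [hφ]
      exact hasFDerivAt_gaussian C σ hσ h y
  -- The tilted first moment is integrable because `h = x - (x - h)`.
  have hsplit : ∫ h, φ (x - h) • (x - h) ∂μ = p x • (x - D x) := by
    have e : ∀ h, φ (x - h) • h = φ (x - h) • x - φ (x - h) • (x - h) := fun h => by
      rw [← smul_sub, sub_sub_cancel]
    have : ∫ h, φ (x - h) • h ∂μ = p x • x - ∫ h, φ (x - h) • (x - h) ∂μ := by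
      simp_rw [e]
      rw [integral_sub ((hint x).smul_const x) (hint' x), integral_smul_const, ← hp]
    rw [smul_sub, hD, smul_inv_smul₀ (hpos x).ne', this, sub_sub_cancel]
  have hgrad : HasGradientAt (fun y => Real.log (p y)) ((1 / σ ^ 2) • (D x - x)) x := by
    rw [hasGradientAt_iff_hasFDerivAt]
    refine (hderiv.log (hpos x).ne').congr_fderiv ?_
    have hI : Integrable (fun h => (-(1 / σ ^ 2)) • (φ (x - h) • (x - h))) μ :=
      (hint' x).fun_smul _
    ext v
    rw [_root_.smul_apply, ContinuousLinearMap.integral_apply]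
    · simp only [innerSL_apply_apply, InnerProductSpace.toDual_apply_apply]
      simp_rw [real_inner_comm v]
      rw [integral_inner hI, integral_smul, hsplit, ← inner_smul_right_eq_smul]
      congr 1
      rw [smul_comm (-(1 / σ ^ 2)), inv_smul_smul₀ (hpos x).ne', neg_smul, ← smul_neg, neg_sub]
    · exact hI.norm.mono' ((innerSL ℝ).continuous.comp (by fun_prop)).aestronglyMeasurable
        (.of_forall fun h => (innerSL_apply_norm _ _).le)
  exact ⟨hpos x, hgrad.differentiableAt, hgrad.gradient⟩
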